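/- arXiv:1109.5430 — 3 statements merged into one kernel-verified Lean document; each statement's English description precedes it below -/
import Mathlib

section
/- Let l_1,…,l_k be k distinct block indices, let Φ = [A_{l_1} … A_{l_k}] be the m×kd matrix concatenating the corresponding blocks, and let z ∈ ℝ^{kd} be partitioned into blocks z_1,…,z_k ∈ ℝ^d. Then max_{1≤i≤k} ‖A_{l_i}^T Φ z‖_2 ≥ (1 − (d−1)ν − (k−1)dμ_B) · max_{1≤j≤k} ‖z_j‖_2. -/
/- Setting: a measurement matrix `A ∈ ℝ^{m×n}` with `n = L·d`, partitioned into `L` column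
blocks of size `m×d`; columns are indexed by pairs `(l, j)` (block `l`, position `j`). -/

noncomputable section

open Finset Matrix

/-- Euclidean (ℓ₂) norm of a finitely indexed real vector. -/
def e2norm {ι : Type*} [Fintype ι] (v : ι → ℝ) : ℝ := Real.sqrt (∑ i, v i ^ 2)

/-- Euclidean inner (dot) product of two real vectors. -/
def dotp {ι : Type*} [Fintype ι] (u v : ι → ℝ) : ℝ := ∑ i, u i * v i

/-- The `(l, j)` column of the block matrix `A` (block `l`, position `j` inside the block). -/
def acol {m L d : ℕ} (A : Matrix (Fin m) (Fin L × Fin d) ℝ) (l : Fin L) (j : Fin d) :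
    Fin m → ℝ :=
  fun i => A i (l, j)

/-- `A_lᵀ v` : correlation of the `l`-th block of `A` with a vector `v ∈ ℝ^m`. -/
def blkT {m L d : ℕ} (A : Matrix (Fin m) (Fin L × Fin d) ℝ) (l : Fin L) (v : Fin m → ℝ) :
    Fin d → ℝ :=
  fun j => dotp (acol A l j) v

/-- Spectral norm (largest singular value) `ρ(X)` of a real matrix, as the supremum of
`‖Xu‖₂ / ‖u‖₂` over nonzero `u`. -/
def specNorm {p q : ℕ} (X : Matrix (Fin p) (Fin q) ℝ) : ℝ :=
  ⨆ u : {u : Fin q → ℝ // u ≠ 0}, e2norm (X *ᵥ u.1) / e2norm u.1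

/-- The `d × d` cross-Gram matrix `A_iᵀ A_j` of two blocks of `A`. -/
def bgram {m L d : ℕ} (A : Matrix (Fin m) (Fin L × Fin d) ℝ) (i j : Fin L) :
    Matrix (Fin d) (Fin d) ℝ :=
  fun a b => dotp (acol A i a) (acol A j b)

/-- Block-coherence `μ_B = max_{i ≠ j} (1/d) ρ(A_iᵀ A_j)`. -/
def blockCoh {m L d : ℕ} (A : Matrix (Fin m) (Fin L × Fin d) ℝ) : ℝ :=
  ⨆ p : {p : Fin L × Fin L // p.1 ≠ p.2},
    (1 / (d : ℝ)) * specNorm (bgram A p.1.1 p.1.2)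

/-- Sub-coherence `ν`: the maximum of `|a_iᵀ a_j|` over pairs of distinct columns lying in the
same block of `A`. -/
def subCoh {m L d : ℕ} (A : Matrix (Fin m) (Fin L × Fin d) ℝ) : ℝ :=
  ⨆ t : {t : Fin L × Fin d × Fin d // t.2.1 ≠ t.2.2},
    |dotp (acol A t.1.1 t.1.2.1) (acol A t.1.1 t.1.2.2)|

/-!
The vector `A_{l_i}ᵀ Φ z` is `∑ⱼ A_{l_i}ᵀ A_{l_j} z_j`, the `i`-th component of a block Gram matrix
acting on `z`. The off-diagonal blocks multiply norms by at most `d μ_B`. A diagonal block has unit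
diagonal and off-diagonal entries of modulus at most `ν`, so its quadratic form is at least
`1 - (d - 1) ν` times the squared norm, and by Cauchy–Schwarz it multiplies norms by at least
`1 - (d - 1) ν`. As in Gershgorin's theorem, it remains to apply the triangle inequality to the
component `i` at which `‖z_i‖` is largest.
-/

theorem mul_norm_le_norm_of_mul_sq_le_inner {E : Type*} [SeminormedAddCommGroup E]
    [InnerProductSpace ℝ E] {c : ℝ} {x y : E} (h : c * ‖x‖ ^ 2 ≤ inner ℝ x y) :
    c * ‖x‖ ≤ ‖y‖ := by
  rcases (norm_nonneg x).eq_or_lt with hx | hx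
  · simp [← hx]
  · refine le_of_mul_le_mul_left ?_ hx
    calc ‖x‖ * (c * ‖x‖) = c * ‖x‖ ^ 2 := by ring
      _ ≤ inner ℝ x y := h
      _ ≤ ‖x‖ * ‖y‖ := real_inner_le_norm x y

theorem sub_mul_iSup_le_iSup_norm_sum {ι F : Type*} [Fintype ι] [Nonempty ι]
    [SeminormedAddCommGroup F] {α β : ℝ} (hβ : 0 ≤ β) {r : ι → ℝ} {y : ι → ι → F}
    (hdiag : ∀ i, α * r i ≤ ‖y i i‖) (hoff : ∀ i j, i ≠ j → ‖y i j‖ ≤ β * r j) :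
    (α - ((Fintype.card ι : ℝ) - 1) * β) * (⨆ j, r j) ≤ ⨆ i, ‖∑ j, y i j‖ := by
  classical
  obtain ⟨i, hi⟩ := exists_eq_ciSup_of_finite (f := r)
  have hmax (j : ι) : r j ≤ r i := hi ▸ le_ciSup (Set.finite_range r).bddAbove j
  have hrest : ‖∑ j ∈ univ.erase i, y i j‖ ≤ ((Fintype.card ι : ℝ) - 1) * (β * r i) :=
    calc ‖∑ j ∈ univ.erase i, y i j‖ ≤ ∑ _j ∈ univ.erase i, β * r i :=
          norm_sum_le_of_le _ fun j hj =>
            (hoff i j (ne_of_mem_erase hj).symm).trans (mul_le_mul_of_nonneg_left (hmax j) hβ)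
      _ = ((Fintype.card ι : ℝ) - 1) * (β * r i) := by
          rw [sum_const, card_erase_of_mem (mem_univ i), card_univ, nsmul_eq_mul,
            Nat.cast_pred Fintype.card_pos]
  have hsplit : ‖y i i‖ ≤ ‖∑ j, y i j‖ + ‖∑ j ∈ univ.erase i, y i j‖ := by
    rw [← add_sum_erase _ _ (mem_univ i)]
    exact norm_le_add_norm_add _ _
  calc (α - ((Fintype.card ι : ℝ) - 1) * β) * (⨆ j, r j)
      = α * r i - ((Fintype.card ι : ℝ) - 1) * (β * r i) := by rw [← hi]; ring
    _ ≤ ‖∑ j, y i j‖ := by linarith [hdiag i]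
    _ ≤ ⨆ i, ‖∑ j, y i j‖ :=
        le_ciSup (f := fun i => ‖∑ j, y i j‖) (Set.finite_range _).bddAbove i

theorem mul_dotProduct_self_le_dotProduct_mulVec {n 𝕜 : Type*} [Fintype n] [Field 𝕜]
    [LinearOrder 𝕜] [IsStrictOrderedRing 𝕜] {G : Matrix n n 𝕜} {c ν : 𝕜}
    (hdiag : ∀ a, c ≤ G a a) (hoff : ∀ a b, a ≠ b → |G a b| ≤ ν) (u : n → 𝕜) :
    (c - ((Fintype.card n : 𝕜) - 1) * ν) * (u ⬝ᵥ u) ≤ u ⬝ᵥ G *ᵥ u := by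
  classical
  -- `(u a ^ 2 + u b ^ 2) / 2 ± u a * u b` are half squares, so `|G a b| ≤ ν` bounds each cross term
  -- whatever the sign of `u a * u b`.
  have hentry (a b : n) : (if a = b then (c + ν) * u a ^ 2 else 0) -
      ν * ((u a ^ 2 + u b ^ 2) / 2) ≤ u a * (G a b * u b) := by
    split_ifs with hab
    · subst hab
      linarith [mul_le_mul_of_nonneg_right (hdiag a) (sq_nonneg (u a))]
    · obtain ⟨hlower, hupper⟩ := abs_le.1 (hoff a b hab)
      linarith [mul_nonneg (neg_le_iff_add_nonneg.1 hlower) (sq_nonneg (u a + u b)),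
        mul_nonneg (sub_nonneg.2 hupper) (sq_nonneg (u a - u b))]
  calc (c - ((Fintype.card n : 𝕜) - 1) * ν) * (u ⬝ᵥ u)
      = ∑ a, ∑ b, ((if a = b then (c + ν) * u a ^ 2 else 0) -
          ν * ((u a ^ 2 + u b ^ 2) / 2)) := by
        simp only [dotProduct, ← sq, sum_sub_distrib, sum_ite_eq, mem_univ, if_true, ← mul_sum,
          ← sum_div, sum_add_distrib, sum_const, card_univ, nsmul_eq_mul]
        ring
    _ ≤ ∑ a, ∑ b, u a * (G a b * u b) :=
        sum_le_sum fun a _ => sum_le_sum fun b _ => hentry a b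
    _ = u ⬝ᵥ G *ᵥ u := by simp only [dotProduct, mulVec, mul_sum]

section EuclideanNorm

theorem e2norm_eq_norm {ι : Type*} [Fintype ι] (v : ι → ℝ) :
    e2norm v = ‖(WithLp.toLp 2 v : EuclideanSpace ℝ ι)‖ := by
  simp [e2norm, EuclideanSpace.norm_eq]

theorem e2norm_nonneg {ι : Type*} [Fintype ι] (v : ι → ℝ) : 0 ≤ e2norm v := Real.sqrt_nonneg _

theorem e2norm_sq {ι : Type*} [Fintype ι] (v : ι → ℝ) : e2norm v ^ 2 = v ⬝ᵥ v := by
  simpa only [e2norm, dotProduct, ← sq] using Real.sq_sqrt (sum_nonneg fun i _ => sq_nonneg (v i))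

theorem mul_e2norm_le_e2norm_mulVec {n : Type*} [Fintype n] {G : Matrix n n ℝ} {c ν : ℝ}
    (hdiag : ∀ a, c ≤ G a a) (hoff : ∀ a b, a ≠ b → |G a b| ≤ ν) (u : n → ℝ) :
    (c - ((Fintype.card n : ℝ) - 1) * ν) * e2norm u ≤ e2norm (G *ᵥ u) := by
  rw [e2norm_eq_norm u, e2norm_eq_norm (G *ᵥ u)]
  apply mul_norm_le_norm_of_mul_sq_le_inner
  rw [← e2norm_eq_norm, e2norm_sq, EuclideanSpace.inner_toLp_toLp, star_trivial,
    dotProduct_comm (G *ᵥ u)]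
  exact mul_dotProduct_self_le_dotProduct_mulVec hdiag hoff u

variable {p q : ℕ} (X : Matrix (Fin p) (Fin q) ℝ)

theorem specNorm_nonneg : 0 ≤ specNorm X :=
  Real.iSup_nonneg fun _ => div_nonneg (e2norm_nonneg _) (e2norm_nonneg _)

open scoped Matrix.Norms.L2Operator in
theorem bddAbove_range_e2norm_mulVec_div :
    BddAbove (Set.range fun u : {u : Fin q → ℝ // u ≠ 0} => e2norm (X *ᵥ u.1) / e2norm u.1) := by
  refine ⟨‖X‖, Set.forall_mem_range.2 fun u => div_le_of_le_mul₀ (e2norm_nonneg _)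
    (norm_nonneg X) ?_⟩
  simp only [e2norm_eq_norm]
  exact l2_opNorm_mulVec X (WithLp.toLp 2 u.1)

theorem e2norm_mulVec_le_specNorm_mul (u : Fin q → ℝ) :
    e2norm (X *ᵥ u) ≤ specNorm X * e2norm u := by
  rcases eq_or_ne u 0 with rfl | hu
  · simp [e2norm]
  · have hpos : 0 < e2norm u := by simpa [e2norm_eq_norm] using hu
    exact (div_le_iff₀ hpos).1 (le_ciSup (bddAbove_range_e2norm_mulVec_div X) ⟨u, hu⟩)

end EuclideanNorm

section BlockMatrix

variable {m L d : ℕ} (A : Matrix (Fin m) (Fin L × Fin d) ℝ)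

/-- The `l`-th column block `A_l` of `A`, as a matrix. It turns `blkT A l` into multiplication by
`A_lᵀ` and `bgram A i j` into the matrix product `A_iᵀ A_j`. -/
def colBlock (l : Fin L) : Matrix (Fin m) (Fin d) ℝ := A.submatrix id (Prod.mk l)

theorem blkT_eq_transpose_mulVec (l : Fin L) (v : Fin m → ℝ) :
    blkT A l v = (colBlock A l)ᵀ *ᵥ v := rfl

theorem bgram_eq_transpose_mul (i j : Fin L) :
    bgram A i j = (colBlock A i)ᵀ * colBlock A j := rfl

theorem sum_colBlock_mulVec {ι : Type*} [Fintype ι] (l : ι → Fin L) (z : ι → Fin d → ℝ) :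
    ∑ j, colBlock A (l j) *ᵥ z j = fun i => ∑ j, ∑ a, A i (l j, a) * z j a := by
  ext i
  simp only [Finset.sum_apply, mulVec, dotProduct, colBlock, submatrix_apply, id_eq]

theorem blkT_sum_colBlock_mulVec {ι : Type*} [Fintype ι] (i : Fin L) (l : ι → Fin L)
    (z : ι → Fin d → ℝ) :
    blkT A i (∑ j, colBlock A (l j) *ᵥ z j) = ∑ j, bgram A i (l j) *ᵥ z j := by
  simp only [blkT_eq_transpose_mulVec, bgram_eq_transpose_mul, mulVec_sum, mulVec_mulVec]

theorem bgram_self_apply_self (l : Fin L) (a : Fin d) :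
    bgram A l l a a = e2norm (acol A l a) ^ 2 :=
  (e2norm_sq _).symm

theorem abs_bgram_self_apply_le_subCoh (l : Fin L) {a b : Fin d} (hab : a ≠ b) :
    |bgram A l l a b| ≤ subCoh A :=
  le_ciSup (f := fun t : {t : Fin L × Fin d × Fin d // t.2.1 ≠ t.2.2} =>
    |dotp (acol A t.1.1 t.1.2.1) (acol A t.1.1 t.1.2.2)|)
    (Set.finite_range _).bddAbove ⟨(l, a, b), hab⟩

theorem blockCoh_nonneg : 0 ≤ blockCoh A :=
  Real.iSup_nonneg fun _ => mul_nonneg (by positivity) (specNorm_nonneg _)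

theorem specNorm_bgram_le (hd : 0 < d) {i j : Fin L} (hij : i ≠ j) :
    specNorm (bgram A i j) ≤ d * blockCoh A := by
  have hle : 1 / (d : ℝ) * specNorm (bgram A i j) ≤ blockCoh A :=
    le_ciSup (f := fun p : {p : Fin L × Fin L // p.1 ≠ p.2} =>
      1 / (d : ℝ) * specNorm (bgram A p.1.1 p.1.2)) (Set.finite_range _).bddAbove ⟨(i, j), hij⟩
  rwa [one_div, inv_mul_le_iff₀ (Nat.cast_pos.2 hd)] at hle

theorem e2norm_bgram_mulVec_le (hd : 0 < d) {i j : Fin L} (hij : i ≠ j) (u : Fin d → ℝ) :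
    e2norm (bgram A i j *ᵥ u) ≤ d * blockCoh A * e2norm u :=
  (e2norm_mulVec_le_specNorm_mul _ u).trans
    (mul_le_mul_of_nonneg_right (specNorm_bgram_le A hd hij) (e2norm_nonneg _))

theorem mul_e2norm_le_e2norm_bgram_self_mulVec {c : ℝ} {l : Fin L}
    (hA : ∀ a, c ≤ e2norm (acol A l a) ^ 2) (u : Fin d → ℝ) :
    (c - ((d : ℝ) - 1) * subCoh A) * e2norm u ≤ e2norm (bgram A l l *ᵥ u) := by
  simpa only [Fintype.card_fin] using
    mul_e2norm_le_e2norm_mulVec (fun a => (hA a).trans_eq (bgram_self_apply_self A l a).symm)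
      (fun _ _ => abs_bgram_self_apply_le_subCoh A l) u

end BlockMatrix

theorem stmt11_general {m L d : ℕ} {ι : Type*} [Fintype ι] [Nonempty ι] (hd : 0 < d)
    (A : Matrix (Fin m) (Fin L × Fin d) ℝ) {c : ℝ} {l : ι → Fin L} (hl : Function.Injective l)
    (hA : ∀ i a, c ≤ e2norm (acol A (l i) a) ^ 2) (z : ι → Fin d → ℝ) :
    (c - ((d : ℝ) - 1) * subCoh A - ((Fintype.card ι : ℝ) - 1) * d * blockCoh A) *
        (⨆ j, e2norm (z j)) ≤
      ⨆ i, e2norm (blkT A (l i) (∑ j, colBlock A (l j) *ᵥ z j)) := by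
  have hβ : 0 ≤ d * blockCoh A := mul_nonneg d.cast_nonneg (blockCoh_nonneg A)
  have hdiag (i : ι) : (c - ((d : ℝ) - 1) * subCoh A) * e2norm (z i) ≤
      ‖WithLp.toLp 2 (bgram A (l i) (l i) *ᵥ z i)‖ :=
    (mul_e2norm_le_e2norm_bgram_self_mulVec A (hA i) (z i)).trans_eq (e2norm_eq_norm _)
  have hoff (i j : ι) (hij : i ≠ j) : ‖WithLp.toLp 2 (bgram A (l i) (l j) *ᵥ z j)‖ ≤
      d * blockCoh A * e2norm (z j) :=
    (e2norm_eq_norm _).symm.trans_le (e2norm_bgram_mulVec_le A hd (hl.ne hij) (z j))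
  simpa only [blkT_sum_colBlock_mulVec, e2norm_eq_norm (Finset.sum _ _), WithLp.toLp_sum, mul_assoc]
    using sub_mul_iSup_le_iSup_norm_sum hβ hdiag hoff

/-- **Eq. (33) of the paper.**  For distinct block indices `l_1, …, l_k`,
`Φ = [A_{l_1} … A_{l_k}]` and a block-partitioned `z`,
`max_{1 ≤ i ≤ k} ‖A_{l_i}ᵀ Φ z‖₂ ≥ (1 - (d-1)ν - (k-1)dμ_B) · max_{1 ≤ j ≤ k} ‖z_j‖₂`. -/
theorem stmt11 {m L d k : ℕ}
    (hm : m < L * d) (hd : 0 < d) (hk : 0 < k)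
    (A : Matrix (Fin m) (Fin L × Fin d) ℝ)
    (hA : ∀ l j, e2norm (acol A l j) = 1)
    (μB ν : ℝ) (hμB : μB = blockCoh A) (hν : ν = subCoh A)
    (l : Fin k → Fin L) (hl : Function.Injective l)
    (z : Fin k → Fin d → ℝ)
    (Phiz : Fin m → ℝ)
    (hPhiz : Phiz = fun i => ∑ j, ∑ a, A i (l j, a) * z j a) :
    (1 - ((d : ℝ) - 1) * ν - ((k : ℝ) - 1) * d * μB) * (⨆ j : Fin k, e2norm (z j)) ≤
      ⨆ i : Fin k, e2norm (blkT A (l i) Phiz) := by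
  have : Nonempty (Fin k) := ⟨⟨0, hk⟩⟩
  simpa only [hPhiz, hμB, hν, sum_colBlock_mulVec, Fintype.card_fin] using
    stmt11_general (c := 1) hd A hl (by simp [hA]) z
end
end

section
/- Let K be a positive integer and t > 0 a real number with 1 − 2Kt > 0. Then (1 − (2K−1)t)² / (1 − (K−1)t) > (1 − 2Kt)² / (1 − Kt). -/
/-!
Put `a = 1 - 2Kt` and `b = 1 - Kt`. Since `(a + t)² = a² + t(2a + t)`, the left-hand side
`(a + t)² / (b + t)` is the mediant of `a² / b` and `t(2a + t) / t = 2a + t`, so it exceeds `a² / b`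
exactly when `a² < (2a + t)b`. As `2b = a + 1`, the difference `(2a + t)b - a²` equals `a + tb`,
which is positive.
-/

section OrderedField

variable {𝕜 : Type*} [Field 𝕜] [LinearOrder 𝕜] [IsStrictOrderedRing 𝕜]

theorem div_lt_add_mul_div_add_iff {x b t m : 𝕜} (hb : 0 < b) (ht : 0 < t) :
    x / b < (x + t * m) / (b + t) ↔ x < m * b := by
  have cross_sub : (x + t * m) * b - x * (b + t) = t * (m * b - x) := by ring
  rw [div_lt_div_iff₀ hb (add_pos hb ht), ← sub_pos, cross_sub, mul_pos_iff_of_pos_left ht, sub_pos]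

theorem sq_div_lt_add_sq_div_add_iff {a b t : 𝕜} (hb : 0 < b) (ht : 0 < t) :
    a ^ 2 / b < (a + t) ^ 2 / (b + t) ↔ a ^ 2 < (2 * a + t) * b := by
  have add_sq_eq : (a + t) ^ 2 = a ^ 2 + t * (2 * a + t) := by ring
  rw [add_sq_eq, div_lt_add_mul_div_add_iff hb ht]

theorem stmt14_general {K t : 𝕜} (ht : 0 < t) (h : 0 ≤ 1 - 2 * K * t) :
    (1 - 2 * K * t) ^ 2 / (1 - K * t) <
      (1 - (2 * K - 1) * t) ^ 2 / (1 - (K - 1) * t) := by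
  have hb : 0 < 1 - K * t := by linarith
  have num_eq : 1 - (2 * K - 1) * t = 1 - 2 * K * t + t := by ring
  have den_eq : 1 - (K - 1) * t = 1 - K * t + t := by ring
  rw [num_eq, den_eq, sq_div_lt_add_sq_div_add_iff hb ht, ← sub_pos]
  calc
    0 < (1 - 2 * K * t) + t * (1 - K * t) := add_pos_of_nonneg_of_pos h (mul_pos ht hb)
    _ = (2 * (1 - 2 * K * t) + t) * (1 - K * t) - (1 - 2 * K * t) ^ 2 := by ring

end OrderedField

/-- **The algebraic inequality underlying (24).**  For a positive integer `K` and a real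
`t > 0` with `1 - 2Kt > 0`,
`(1 - (2K-1)t)² / (1 - (K-1)t) > (1 - 2Kt)² / (1 - Kt)`. -/
theorem stmt14 (K : ℕ) (hK : 0 < K) (t : ℝ) (ht : 0 < t)
    (h : 0 < 1 - 2 * (K : ℝ) * t) :
    (1 - (2 * (K : ℝ) - 1) * t) ^ 2 / (1 - ((K : ℝ) - 1) * t) >
      (1 - 2 * (K : ℝ) * t) ^ 2 / (1 - (K : ℝ) * t) :=
  stmt14_general ht h.le
end

section
/- Assume 1 − (d−1)ν − (K−1)dμ_B > 0. Then for any K distinct block indices l_1,…,l_K, the m×Kd matrix [A_{l_1} … A_{l_K}] obtained by concatenating the corresponding blocks has linearly independent columns. -/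
/- Setting: a measurement matrix `A ∈ ℝ^{m×n}` with `n = L·d`, partitioned into `L` column
blocks of size `m×d`; columns are indexed by pairs `(l, j)` (block `l`, position `j`). -/

noncomputable section

open Finset Matrix

/-! If the chosen blocks satisfy `∑ k, A_k x_k = 0`, take the inner product with `A_k x_k`, where
`k` maximises `‖x_k‖`. The diagonal term is at least `(1 - (d-1)ν) ‖x_k‖²`, by the same comparison
of diagonal and off-diagonal Gram entries inside a single block, and each of the `K - 1` cross terms
is at most `dμ_B ‖x_k‖²` in absolute value. The terms sum to zero, so `x_k = 0`. -/

section InnerProductSpace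

open scoped Matrix.Norms.L2Operator

variable {𝕜 E : Type*} [RCLike 𝕜] [SeminormedAddCommGroup E] [InnerProductSpace 𝕜 E]

theorem norm_sq_sub_sum_erase_le_re_inner_sum {κ : Type*} [Fintype κ] [DecidableEq κ]
    (w : κ → E) (k : κ) :
    ‖w k‖ ^ 2 - ∑ k' ∈ univ.erase k, ‖inner 𝕜 (w k) (w k')‖ ≤
      RCLike.re (inner 𝕜 (w k) (∑ k', w k')) := by
  have hoff : -∑ k' ∈ univ.erase k, ‖inner 𝕜 (w k) (w k')‖ ≤
      ∑ k' ∈ univ.erase k, RCLike.re (inner 𝕜 (w k) (w k')) := by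
    rw [← sum_neg_distrib]
    exact sum_le_sum fun k' _ => neg_le_of_abs_le (RCLike.abs_re_le_norm _)
  rw [inner_sum, map_sum, ← add_sum_erase _ _ (mem_univ k), inner_self_eq_norm_sq]
  linarith

theorem eq_zero_of_sum_eq_zero_of_sum_row_lt_diag {κ : Type*} [Fintype κ] [DecidableEq κ]
    {w : κ → E} {r a : κ → ℝ} {b : κ → κ → ℝ} (hr : ∀ k, 0 ≤ r k)
    (hb : ∀ k k', k ≠ k' → 0 ≤ b k k') (hdiag : ∀ k, a k * r k ^ 2 ≤ ‖w k‖ ^ 2)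
    (hoff : ∀ k k', k ≠ k' → ‖inner 𝕜 (w k) (w k')‖ ≤ b k k' * (r k * r k'))
    (hdom : ∀ k, ∑ k' ∈ univ.erase k, b k k' < a k) (hsum : ∑ k, w k = 0) (k : κ) : r k = 0 := by
  have : Nonempty κ := ⟨k⟩
  obtain ⟨p, hp⟩ := Finite.exists_max r
  have hrow : ‖w p‖ ^ 2 ≤ ∑ k' ∈ univ.erase p, ‖inner 𝕜 (w p) (w k')‖ := by
    simpa [hsum] using norm_sq_sub_sum_erase_le_re_inner_sum (𝕜 := 𝕜) w p
  have hcross : ∀ k' ∈ univ.erase p, ‖inner 𝕜 (w p) (w k')‖ ≤ b p k' * r p ^ 2 := by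
    intro k' hk'
    have hne : p ≠ k' := (ne_of_mem_erase hk').symm
    calc ‖inner 𝕜 (w p) (w k')‖ ≤ b p k' * (r p * r k') := hoff p k' hne
      _ ≤ b p k' * (r p * r p) :=
        mul_le_mul_of_nonneg_left (mul_le_mul_of_nonneg_left (hp k') (hr p)) (hb p k' hne)
      _ = b p k' * r p ^ 2 := by rw [sq]
  have hle : a p * r p ^ 2 ≤ (∑ k' ∈ univ.erase p, b p k') * r p ^ 2 := by
    rw [sum_mul]
    exact (hdiag p).trans (hrow.trans (sum_le_sum hcross))
  have hp_zero : r p = 0 := by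
    by_contra hne
    have hpos : 0 < r p ^ 2 := by positivity
    exact hle.not_gt (mul_lt_mul_of_pos_right (hdom p) hpos)
  exact le_antisymm ((hp k).trans_eq hp_zero) (hr k)

theorem sum_sum_erase_add_div_two {ι : Type*} [Fintype ι] [DecidableEq ι] (s : ι → ℝ) :
    ∑ i, ∑ j ∈ univ.erase i, (s i + s j) / 2 = ((Fintype.card ι : ℝ) - 1) * ∑ i, s i := by
  simp only [sum_erase_eq_sub (mem_univ _), sum_sub_distrib, ← sum_div, sum_add_distrib,
    sum_const, card_univ, nsmul_eq_mul, ← mul_sum]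
  ring

theorem one_sub_mul_norm_sq_le_norm_sum_smul_sq {ι : Type*} [Fintype ι] {v : ι → E}
    {ν : ℝ} (hv : ∀ j, ‖v j‖ = 1) (hν : ∀ i j, i ≠ j → ‖inner 𝕜 (v i) (v j)‖ ≤ ν)
    (x : EuclideanSpace 𝕜 ι) :
    (1 - ((Fintype.card ι : ℝ) - 1) * ν) * ‖x‖ ^ 2 ≤ ‖∑ j, x j • v j‖ ^ 2 := by
  classical
  have hcross : ∀ i, ∀ j ∈ univ.erase i,
      ‖inner 𝕜 (x i • v i) (x j • v j)‖ ≤ ν * ((‖x i‖ ^ 2 + ‖x j‖ ^ 2) / 2) := by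
    intro i j hj
    have hij : ‖inner 𝕜 (v i) (v j)‖ ≤ ν := hν i j (ne_of_mem_erase hj).symm
    have hν₀ : 0 ≤ ν := (norm_nonneg _).trans hij
    calc ‖inner 𝕜 (x i • v i) (x j • v j)‖ = ‖inner 𝕜 (v i) (v j)‖ * (‖x i‖ * ‖x j‖) := by
          rw [inner_smul_left, inner_smul_right, norm_mul, norm_mul, RCLike.norm_conj]
          ring
      _ ≤ ν * (‖x i‖ * ‖x j‖) := by gcongr
      _ ≤ ν * ((‖x i‖ ^ 2 + ‖x j‖ ^ 2) / 2) := by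
        gcongr
        linarith [two_mul_le_add_sq ‖x i‖ ‖x j‖]
  calc (1 - ((Fintype.card ι : ℝ) - 1) * ν) * ‖x‖ ^ 2
      = ∑ i, (‖x i‖ ^ 2 - ∑ j ∈ univ.erase i, ν * ((‖x i‖ ^ 2 + ‖x j‖ ^ 2) / 2)) := by
        simp only [sum_sub_distrib, ← mul_sum]
        rw [sum_sum_erase_add_div_two fun i => ‖x i‖ ^ 2, EuclideanSpace.norm_sq_eq]
        ring
    _ ≤ ∑ i, (‖x i • v i‖ ^ 2 - ∑ j ∈ univ.erase i, ‖inner 𝕜 (x i • v i) (x j • v j)‖) := by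
        gcongr with i _ j hj
        · rw [norm_smul, hv, mul_one]
        · exact hcross i j hj
    _ ≤ ∑ i, RCLike.re (inner 𝕜 (x i • v i) (∑ j, x j • v j)) :=
        sum_le_sum fun i _ => norm_sq_sub_sum_erase_le_re_inner_sum (fun j => x j • v j) i
    _ = ‖∑ j, x j • v j‖ ^ 2 := by rw [← map_sum, ← sum_inner, inner_self_eq_norm_sq]

variable (𝕜) in
/-- The cross-Gram matrix of two families of vectors, the analogue of `A_iᵀ A_j` for two blocks in
an arbitrary inner product space. -/
def crossGram {ι ι' : Type*} (v : ι → E) (w : ι' → E) : Matrix ι ι' 𝕜 :=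
  Matrix.of fun i j => inner 𝕜 (v i) (w j)

theorem inner_sum_smul_sum_smul_eq_inner_crossGram {ι ι' : Type*} [Fintype ι] [Fintype ι']
    (v : ι → E) (w : ι' → E) (x : EuclideanSpace 𝕜 ι) (y : EuclideanSpace 𝕜 ι') :
    inner 𝕜 (∑ i, x i • v i) (∑ j, y j • w j) =
      inner 𝕜 x (WithLp.toLp 2 (crossGram 𝕜 v w *ᵥ y.ofLp)) := by
  simp only [sum_inner, inner_sum, inner_smul_left, inner_smul_right, PiLp.inner_apply, crossGram,
    Matrix.mulVec, dotProduct, Matrix.of_apply, RCLike.inner_apply, sum_mul, mul_sum]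
  rw [sum_comm]
  exact sum_congr rfl fun i _ => sum_congr rfl fun j _ => by ring

theorem norm_inner_sum_smul_sum_smul_le {ι ι' : Type*} [Fintype ι] [Fintype ι'] [DecidableEq ι']
    (v : ι → E) (w : ι' → E) (x : EuclideanSpace 𝕜 ι) (y : EuclideanSpace 𝕜 ι') :
    ‖inner 𝕜 (∑ i, x i • v i) (∑ j, y j • w j)‖ ≤ ‖crossGram 𝕜 v w‖ * (‖x‖ * ‖y‖) := by
  rw [inner_sum_smul_sum_smul_eq_inner_crossGram]
  calc _ ≤ ‖x‖ * ‖WithLp.toLp 2 (crossGram 𝕜 v w *ᵥ y.ofLp)‖ := norm_inner_le_norm _ _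
    _ ≤ ‖x‖ * (‖crossGram 𝕜 v w‖ * ‖y‖) := by
      gcongr
      exact Matrix.l2_opNorm_mulVec _ _
    _ = ‖crossGram 𝕜 v w‖ * (‖x‖ * ‖y‖) := by ring

variable {κ : Type*} [Fintype κ] {ι : κ → Type*} [∀ k, Fintype (ι k)] [∀ k, DecidableEq (ι k)]

theorem linearIndependent_of_sum_norm_crossGram_row_lt_diag [DecidableEq κ] {v : ∀ k, ι k → E}
    {a : κ → ℝ}
    (hdiag : ∀ k (x : EuclideanSpace 𝕜 (ι k)), a k * ‖x‖ ^ 2 ≤ ‖∑ j, x j • v k j‖ ^ 2)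
    (hdom : ∀ k, ∑ k' ∈ univ.erase k, ‖crossGram 𝕜 (v k) (v k')‖ < a k) :
    LinearIndependent 𝕜 fun c : Σ k, ι k => v c.1 c.2 := by
  rw [Fintype.linearIndependent_iff]
  rintro g hg ⟨k, j⟩
  let x (k : κ) : EuclideanSpace 𝕜 (ι k) := WithLp.toLp 2 fun j => g ⟨k, j⟩
  have hsum : ∑ k, ∑ j, x k j • v k j = 0 := by rwa [Fintype.sum_sigma] at hg
  have hx : ‖x k‖ = 0 :=
    eq_zero_of_sum_eq_zero_of_sum_row_lt_diag (𝕜 := 𝕜) (r := fun k => ‖x k‖)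
      (fun _ => norm_nonneg _) (fun _ _ _ => norm_nonneg _) (fun k => hdiag k (x k))
      (fun _ _ _ => norm_inner_sum_smul_sum_smul_le _ _ _ _) hdom hsum k
  exact congrFun (congrArg WithLp.ofLp (norm_eq_zero.mp hx)) j

theorem stmt17_general {v : ∀ k, ι k → E} {ν μ : ℝ} (hv : ∀ k j, ‖v k j‖ = 1)
    (hν : ∀ k i j, i ≠ j → ‖inner 𝕜 (v k i) (v k j)‖ ≤ ν)
    (hμ : ∀ k k', k ≠ k' → ‖crossGram 𝕜 (v k) (v k')‖ ≤ μ)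
    (hcond : ∀ k, 0 < 1 - ((Fintype.card (ι k) : ℝ) - 1) * ν - ((Fintype.card κ : ℝ) - 1) * μ) :
    LinearIndependent 𝕜 fun c : Σ k, ι k => v c.1 c.2 := by
  classical
  refine linearIndependent_of_sum_norm_crossGram_row_lt_diag
    (fun k => one_sub_mul_norm_sq_le_norm_sum_smul_sq (hv k) (hν k)) fun k => ?_
  have hcard : ((univ.erase k).card : ℝ) = (Fintype.card κ : ℝ) - 1 := by
    rw [cast_card_erase_of_mem (mem_univ k), card_univ]
  calc ∑ k' ∈ univ.erase k, ‖crossGram 𝕜 (v k) (v k')‖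
      ≤ (univ.erase k).card • μ :=
        sum_le_card_nsmul _ _ _ fun k' hk' => hμ k k' (ne_of_mem_erase hk').symm
    _ = ((Fintype.card κ : ℝ) - 1) * μ := by rw [nsmul_eq_mul, hcard]
    _ < 1 - ((Fintype.card (ι k) : ℝ) - 1) * ν := by linarith [hcond k]

end InnerProductSpace

section BlockMatrix

open scoped Matrix.Norms.L2Operator

theorem e2norm_eq_norm_toLp {ι : Type*} [Fintype ι] (v : ι → ℝ) :
    e2norm v = ‖WithLp.toLp 2 v‖ := by
  simp only [e2norm, EuclideanSpace.norm_eq, Real.norm_eq_abs, sq_abs]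

theorem dotp_eq_inner_toLp {ι : Type*} [Fintype ι] (u v : ι → ℝ) :
    dotp u v = inner ℝ (WithLp.toLp 2 u) (WithLp.toLp 2 v) := by
  simp only [dotp, PiLp.inner_apply, RCLike.inner_apply, conj_trivial, mul_comm]

theorem specNorm_eq_l2_opNorm {p q : ℕ} (X : Matrix (Fin p) (Fin q) ℝ) : specNorm X = ‖X‖ := by
  have hle (u : Fin q → ℝ) : e2norm (X *ᵥ u) / e2norm u ≤ ‖X‖ := by
    simp only [e2norm_eq_norm_toLp]
    exact div_le_of_le_mul₀ (norm_nonneg _) (norm_nonneg _) (X.l2_opNorm_mulVec (WithLp.toLp 2 u))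
  have hbdd : BddAbove (Set.range fun u : {u : Fin q → ℝ // u ≠ 0} =>
      e2norm (X *ᵥ u.1) / e2norm u.1) := ⟨‖X‖, Set.forall_mem_range.mpr fun u => hle u.1⟩
  have hnonneg : 0 ≤ specNorm X :=
    Real.iSup_nonneg fun u => div_nonneg (Real.sqrt_nonneg _) (Real.sqrt_nonneg _)
  refine le_antisymm (Real.iSup_le (fun u => hle u.1) (norm_nonneg X)) ?_
  refine ContinuousLinearMap.opNorm_le_bound' _ hnonneg fun u hu => ?_
  have hu_pos : 0 < ‖u‖ := lt_of_le_of_ne (norm_nonneg u) hu.symm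
  have hu_ne : u.ofLp ≠ 0 := fun h => hu (by rw [(WithLp.ofLp_eq_zero 2).mp h, norm_zero])
  rw [← div_le_iff₀ hu_pos]
  have hratio := le_ciSup hbdd ⟨u.ofLp, hu_ne⟩
  rwa [e2norm_eq_norm_toLp, e2norm_eq_norm_toLp] at hratio

variable {m L d : ℕ} (A : Matrix (Fin m) (Fin L × Fin d) ℝ)

/-- The `(l, j)` column of `A` as a Euclidean vector: `acol A l j` lives in a function type, whose
norm in Mathlib is the sup norm. -/
def blockCol (l : Fin L) (j : Fin d) : EuclideanSpace ℝ (Fin m) :=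
  WithLp.toLp 2 (acol A l j)

theorem norm_blockCol (l : Fin L) (j : Fin d) : ‖blockCol A l j‖ = e2norm (acol A l j) :=
  (e2norm_eq_norm_toLp (acol A l j)).symm

theorem crossGram_blockCol (i j : Fin L) :
    crossGram ℝ (blockCol A i) (blockCol A j) = bgram A i j := by
  ext a b
  exact (dotp_eq_inner_toLp (acol A i a) (acol A j b)).symm

theorem norm_inner_blockCol_le_subCoh (l : Fin L) {i j : Fin d} (hij : i ≠ j) :
    ‖inner ℝ (blockCol A l i) (blockCol A l j)‖ ≤ subCoh A := by
  rw [blockCol, blockCol, ← dotp_eq_inner_toLp, Real.norm_eq_abs]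
  exact le_ciSup (f := fun t : {t : Fin L × Fin d × Fin d // t.2.1 ≠ t.2.2} =>
    |dotp (acol A t.1.1 t.1.2.1) (acol A t.1.1 t.1.2.2)|)
    (Set.finite_range _).bddAbove ⟨(l, i, j), hij⟩

theorem norm_crossGram_blockCol_le_mul_blockCoh (hd : 0 < d) {i j : Fin L} (hij : i ≠ j) :
    ‖crossGram ℝ (blockCol A i) (blockCol A j)‖ ≤ d * blockCoh A := by
  have hle : 1 / (d : ℝ) * specNorm (bgram A i j) ≤ blockCoh A :=
    le_ciSup (f := fun p : {p : Fin L × Fin L // p.1 ≠ p.2} =>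
      (1 / (d : ℝ)) * specNorm (bgram A p.1.1 p.1.2)) (Set.finite_range _).bddAbove ⟨(i, j), hij⟩
  rwa [one_div, inv_mul_le_iff₀ (Nat.cast_pos.mpr hd), specNorm_eq_l2_opNorm,
    ← crossGram_blockCol] at hle

variable {A} in
theorem linearIndependent_columns_of_blockCol {κ : Type*} {l : κ → Fin L}
    (h : LinearIndependent ℝ fun c : Σ _ : κ, Fin d => blockCol A (l c.1) c.2) :
    LinearIndependent ℝ fun c : κ × Fin d => fun i => A i (l c.1, c.2) :=
  (h.comp (Equiv.sigmaEquivProd κ (Fin d)).symm (Equiv.injective _)).of_comp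
    (WithLp.linearEquiv 2 ℝ (Fin m → ℝ)).symm.toLinearMap

end BlockMatrix

/-- **Linear independence of concatenated blocks.**  If `1 - (d-1)ν - (K-1)dμ_B > 0`, then
for any `K` distinct block indices `l 0, …, l (K-1)`, the concatenated matrix
`[A_{l 0} … A_{l (K-1)}]` has linearly independent columns. -/
theorem stmt17 {m L d K : ℕ}
    (hm : m < L * d) (hd : 0 < d)
    (A : Matrix (Fin m) (Fin L × Fin d) ℝ)
    (hA : ∀ l j, e2norm (acol A l j) = 1)
    (μB ν : ℝ) (hμB : μB = blockCoh A) (hν : ν = subCoh A)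
    (hcond : 0 < 1 - ((d : ℝ) - 1) * ν - ((K : ℝ) - 1) * d * μB)
    (l : Fin K → Fin L) (hl : Function.Injective l) :
    LinearIndependent ℝ (fun c : Fin K × Fin d => fun i => A i (l c.1, c.2)) := by
  subst hμB hν
  exact linearIndependent_columns_of_blockCol <|
    stmt17_general (v := fun k => blockCol A (l k)) (ν := subCoh A) (μ := d * blockCoh A)
      (fun k j => (norm_blockCol A (l k) j).trans (hA (l k) j))
      (fun k _ _ => norm_inner_blockCol_le_subCoh A (l k))
      (fun _ _ hk => norm_crossGram_blockCol_le_mul_blockCoh A hd (hl.ne hk))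
      (fun _ => by simpa only [Fintype.card_fin, mul_assoc] using hcond)
end
end
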